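/- For every closed term M of Λ⊕, the call-by-name big-step and small-step semantics coincide: ⟪M⟫n = ⟦M⟧n, where ⟪M⟫n is the pointwise infimum of all distributions 𝒟 with M ⇓n 𝒟 and ⟦M⟧n is the pointwise supremum of all distributions 𝒟 with M ⇒n 𝒟. -/

import Mathlib

open scoped ENNReal

/-- Terms of Λ⊕ (and of Λ⊕⁺), in de Bruijn notation: variables, abstractions,
applications and binary (probabilistic) sums.  De Bruijn indices realize
"terms up to renaming of bound variables". -/
inductive Term : Type
  | var : ℕ → Term
  | lam : Term → Term
  | app : Term → Term → Term
  | choice : Term → Term → Term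
  deriving DecidableEq

namespace Term

/-- Values: variables and abstractions. -/
inductive IsValue : Term → Prop
  | var (n : ℕ) : IsValue (var n)
  | lam (M : Term) : IsValue (lam M)

/-- Boolean value test. -/
def isVal : Term → Bool
  | var _ => true
  | lam _ => true
  | _ => false

/-- Shifting of de Bruijn indices: add `d` to all indices `≥ c`. -/
def shift (d c : ℕ) : Term → Term
  | var n => if n < c then var n else var (n + d)
  | lam M => lam (shift d (c + 1) M)
  | app M N => app (shift d c M) (shift d c N)
  | choice M N => choice (shift d c M) (shift d c N)

/-- Capture-avoiding substitution `M[j := N]` (the variable `j` is consumed and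
higher indices are decremented, as in a β-step). -/
def subst : Term → ℕ → Term → Term
  | var n, j, N => if n = j then shift j 0 N else if j < n then var (n - 1) else var n
  | lam M, j, N => lam (subst M (j + 1) N)
  | app M L, j, N => app (subst M j N) (subst L j N)
  | choice M L, j, N => choice (subst M j N) (subst L j N)

/-- All free indices are `< n`. -/
def closedUnder : Term → ℕ → Prop
  | var m, n => m < n
  | lam M, n => closedUnder M (n + 1)
  | app M N, n => closedUnder M n ∧ closedUnder N n
  | choice M N, n => closedUnder M n ∧ closedUnder N n

/-- Closed terms: no free variables. -/
def Closed (M : Term) : Prop := closedUnder M 0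

end Term

/-- (Sub)distributions are represented as functions from terms into `ℝ≥0∞`;
genuine distributions (`IsDist`) are supported on values and have mass `≤ 1`. -/
abbrev PDist := Term → ℝ≥0∞

/-- The sum (total mass) `Σ𝒟` of a distribution. -/
noncomputable def dsum (D : PDist) : ℝ≥0∞ := ∑' M, D M

/-- The support of a distribution. -/
def dsupp (D : PDist) : Set Term := {M | D M ≠ 0}

/-- The everywhere-zero distribution `∅`. -/
noncomputable def dzero : PDist := fun _ => 0

/-- The Dirac distribution `{V^1}`. -/
noncomputable def dirac (V : Term) : PDist := fun M => if M = V then 1 else 0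

/-- Being a genuine (sub)probability distribution: supported on values, with
total mass at most one. -/
def IsDist (D : PDist) : Prop := (∀ M, D M ≠ 0 → M.IsValue) ∧ dsum D ≤ 1

/-- Call-by-value reduction `↦v`, relating a term to the (equiprobable) finite
sequence of its possible reducts. -/
inductive RedV : Term → List Term → Prop
  | beta {M V : Term} : V.IsValue → RedV (.app (.lam M) V) [M.subst 0 V]
  | choice {V W : Term} : V.IsValue → W.IsValue → RedV (.choice V W) [V, W]
  | appL {M N : Term} {Ls : List Term} :
      RedV M Ls → RedV (.app M N) (Ls.map (fun L => .app L N))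
  | appR {V M : Term} {Ns : List Term} :
      V.IsValue → RedV M Ns → RedV (.app V M) (Ns.map (fun L => .app V L))
  | choiceL {M N : Term} {Ls : List Term} :
      RedV M Ls → RedV (.choice M N) (Ls.map (fun L => .choice L N))
  | choiceR {V M : Term} {Ns : List Term} :
      V.IsValue → RedV M Ns → RedV (.choice V M) (Ns.map (fun L => .choice V L))

/-- Call-by-name reduction `↦n`. -/
inductive RedN : Term → List Term → Prop
  | beta {M N : Term} : RedN (.app (.lam M) N) [M.subst 0 N]
  | choice {M N : Term} : RedN (.choice M N) [M, N]
  | appL {M N : Term} {Ls : List Term} :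
      RedN M Ls → RedN (.app M N) (Ls.map (fun L => .app L N))

/-- The inductive small-step convergence relation `⇒`, parametric in the
underlying reduction relation: any term evaluates to `∅`; a value `V`
evaluates to `{V^1}`; and if `M ↦ N₁,…,Nₙ` and `Nᵢ ⇒ 𝒟ᵢ` then
`M ⇒ Σᵢ (1/n)𝒟ᵢ`. -/
inductive Conv (Red : Term → List Term → Prop) : Term → PDist → Prop
  | bot (M : Term) : Conv Red M dzero
  | val {V : Term} : V.IsValue → Conv Red V (dirac V)
  | step {M : Term} {Ns : List Term} (Ds : Fin Ns.length → PDist) :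
      Red M Ns → (∀ i, Conv Red (Ns.get i) (Ds i)) →
      Conv Red M (fun W => (∑ i, Ds i W) / (Ns.length : ℝ≥0∞))

/-- Call-by-value small-step convergence `⇒v`. -/
def SmallV : Term → PDist → Prop := Conv RedV

/-- Call-by-name small-step convergence `⇒n`. -/
def SmallN : Term → PDist → Prop := Conv RedN

/-- The small-step semantics `⟦M⟧`: the pointwise supremum of all distributions
derivable for `M`. -/
noncomputable def semOf (S : Term → PDist → Prop) (M : Term) : PDist :=
  fun W => ⨆ (D : PDist) (_ : S M D), D W

/-- Call-by-value small-step semantics `⟦M⟧v`. -/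
noncomputable def semV : Term → PDist := semOf SmallV

/-- Call-by-name small-step semantics `⟦M⟧n`. -/
noncomputable def semN : Term → PDist := semOf SmallN

/-- One-step unfolding of the divergence inference system: a value diverges
with probability `0`; if `M ↦ N₁,…,Nₙ` and `Nᵢ` diverges with probability
`pᵢ`, then `M` diverges with probability `Σᵢ (1/n)pᵢ`. -/
def DivStep (Red : Term → List Term → Prop) (R : Term → ℝ≥0∞ → Prop)
    (M : Term) (p : ℝ≥0∞) : Prop :=
  (M.IsValue ∧ p = 0) ∨
    ∃ (Ns : List Term) (ps : Fin Ns.length → ℝ≥0∞),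
      Red M Ns ∧ (∀ i, R (Ns.get i) (ps i)) ∧ p = (∑ i, ps i) / (Ns.length : ℝ≥0∞)

/-- The coinductively-defined divergence relation `⇓div`: the union of all
consistent relations between terms and probabilities in `[0,1]`. -/
def Diverges (Red : Term → List Term → Prop) (M : Term) (p : ℝ≥0∞) : Prop :=
  ∃ R : Term → ℝ≥0∞ → Prop,
    (∀ N q, R N q → q ≤ 1 ∧ DivStep Red R N q) ∧ R M p

/-- Call-by-value divergence `⇓div`. -/
def DivV : Term → ℝ≥0∞ → Prop := Diverges RedV

/-- Call-by-name divergence `⇓div,n`. -/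
def DivN : Term → ℝ≥0∞ → Prop := Diverges RedN

/-- One-step unfolding of the call-by-value big-step inference system. -/
def BigVStep (R : Term → PDist → Prop) (M : Term) (D : PDist) : Prop :=
  (M.IsValue ∧ D = dirac M) ∨
  (∃ (N L : Term) (E F : PDist) (G : Term → Term → PDist),
      M = .app N L ∧ R N E ∧ R L F ∧
      (∀ P V, E (.lam P) ≠ 0 → V.IsValue → F V ≠ 0 → R (P.subst 0 V) (G P V)) ∧
      D = fun W => ∑' (P : Term), ∑' (V : Term), E (.lam P) * F V * G P V W) ∨
  (∃ (N L : Term) (E F : PDist),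
      M = .choice N L ∧ R N E ∧ R L F ∧
      D = fun W => (E W * dsum F + F W * dsum E) / 2)

/-- The coinductive call-by-value big-step relation `⇓v`: the union of all
consistent relations between terms and distributions. -/
def BigV (M : Term) (D : PDist) : Prop :=
  ∃ R : Term → PDist → Prop,
    (∀ N E, R N E → IsDist E ∧ BigVStep R N E) ∧ R M D

/-- One-step unfolding of the call-by-name big-step inference system. -/
def BigNStep (R : Term → PDist → Prop) (M : Term) (D : PDist) : Prop :=
  (M.IsValue ∧ D = dirac M) ∨
  (∃ (N L : Term) (E : PDist) (F : Term → PDist),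
      M = .app N L ∧ R N E ∧
      (∀ P, E (.lam P) ≠ 0 → R (P.subst 0 L) (F P)) ∧
      D = fun W => ∑' (P : Term), E (.lam P) * F P W) ∨
  (∃ (N L : Term) (E F : PDist),
      M = .choice N L ∧ R N E ∧ R L F ∧ D = fun W => (E W + F W) / 2)

/-- The coinductive call-by-name big-step relation `⇓n`. -/
def BigN (M : Term) (D : PDist) : Prop :=
  ∃ R : Term → PDist → Prop,
    (∀ N E, R N E → IsDist E ∧ BigNStep R N E) ∧ R M D

/-- Big-step semantics `⟪M⟫`: the pointwise infimum of all distributions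
derivable for `M` in a big-step system. -/
noncomputable def bigSemOf (B : Term → PDist → Prop) (M : Term) : PDist :=
  fun W => ⨅ (D : PDist) (_ : B M D), D W

/-!
Both semantics are the least fixed point of the functional `bigStepFunctional` on maps from terms to
distributions that reads the big-step rules as equations.

The infimum of all big-step distributions is a pre-fixed point of it, hence above the least fixed
point. For the small-step semantics, a fixed point of the functional is invariant under averaging
over the reducts of a term, so it dominates every small-step derivation. Conversely `⟦·⟧n` is a
pre-fixed point: as call-by-name reduction is deterministic, the distributions derivable for a given
term are directed, so suprema commute with the infinite sum in the application rule. Finally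
`⟦·⟧n`, being a fixed point with values in genuine distributions, is itself a big-step derivation.
-/

section Suprema

theorem tsum_iSup_of_directed {ι α : Type*} {f : ι → α → ℝ≥0∞} (hf : Directed (· ≤ ·) f) :
    ∑' a, ⨆ i, f i a = ⨆ i, ∑' a, f i a := by
  simp only [ENNReal.tsum_eq_iSup_sum]
  rw [iSup_comm]
  refine iSup_congr fun s => ENNReal.finsetSum_iSup fun i j => ?_
  obtain ⟨k, hik, hjk⟩ := hf i j
  exact ⟨k, fun a => ⟨hik a, hjk a⟩⟩

theorem sum_iSup_eq_iSup_sum_pi {ι : Type*} [Fintype ι] {κ : ι → Type*} [∀ i, Nonempty (κ i)]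
    (f : ∀ i, κ i → ℝ≥0∞) : ∑ i, ⨆ k, f i k = ⨆ g : ∀ i, κ i, ∑ i, f i (g i) := by
  classical
  rw [← ENNReal.finsetSum_iSup (f := fun i (g : ∀ i, κ i) => f i (g i))]
  · exact Finset.sum_congr rfl fun i _ => ((Function.surjective_eval i).iSup_comp (f i)).symm
  · intro g h
    refine ⟨fun i => if f i (g i) ≤ f i (h i) then h i else g i, fun i => ?_⟩
    dsimp only
    split_ifs with hgh
    · exact ⟨hgh, le_rfl⟩
    · exact ⟨le_rfl, (not_le.1 hgh).le⟩

end Suprema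

section Average

variable {α β : Type*}

/-- The average `Σᵢ (1/n) f(xᵢ)` of `f` over a list `x₁, …, xₙ`, as in the reduction rule of `Conv`.
For the empty list it is `0 / 0 = 0`. -/
noncomputable def average (l : List α) (f : α → ℝ≥0∞) : ℝ≥0∞ :=
  (∑ i, f (l.get i)) / (l.length : ℝ≥0∞)

theorem average_singleton (a : α) (f : α → ℝ≥0∞) : average [a] f = f a := by
  simp [average]

theorem average_pair (a b : α) (f : α → ℝ≥0∞) : average [a, b] f = (f a + f b) / 2 := by
  simp [average, Fin.sum_univ_two]

theorem average_map (g : α → β) (l : List α) (f : β → ℝ≥0∞) :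
    average (l.map g) f = average l fun a => f (g a) := by
  simp only [average, List.length_map]
  congr 1
  exact Fintype.sum_equiv (finCongr (List.length_map g)) _ _ fun i => by simp

theorem tsum_sum_div_mul {ι : Type*} [Fintype ι] (f : ι → β → ℝ≥0∞) (c : ℝ≥0∞) (g : β → ℝ≥0∞) :
    ∑' b, (∑ i, f i b) / c * g b = (∑ i, ∑' b, f i b * g b) / c := by
  simp only [div_eq_mul_inv, mul_right_comm _ c⁻¹]
  rw [ENNReal.tsum_mul_right]
  congr 1
  simp only [Finset.sum_mul]
  exact Summable.tsum_finsetSum fun _ _ => ENNReal.summable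

end Average

section Distributions

theorem dirac_self (V : Term) : dirac V V = 1 := if_pos rfl

theorem dirac_of_ne {V W : Term} (h : W ≠ V) : dirac V W = 0 := if_neg h

theorem tsum_dirac_lam_mul (Q : Term) (f : Term → ℝ≥0∞) :
    ∑' P : Term, dirac (.lam Q) (.lam P) * f P = f Q := by
  rw [tsum_eq_single Q fun P hP => by rw [dirac_of_ne (by simpa using hP), zero_mul],
    dirac_self, one_mul]

theorem isDist_dzero : IsDist dzero :=
  ⟨fun _ h => absurd rfl h, by simp [dsum, dzero]⟩

theorem isDist_dirac {V : Term} (hV : V.IsValue) : IsDist (dirac V) := by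
  refine ⟨fun M hM => ?_, by simp [dsum, dirac]⟩
  obtain rfl : M = V := not_imp_comm.1 dirac_of_ne hM
  exact hV

theorem isDist_sum_div_natCast {n : ℕ} {Ds : Fin n → PDist} (hDs : ∀ i, IsDist (Ds i)) :
    IsDist fun W => (∑ i, Ds i W) / (n : ℝ≥0∞) := by
  constructor
  · intro W hW
    have hsum : ∑ i, Ds i W ≠ 0 := fun h => hW (by simp [h])
    obtain ⟨i, -, hi⟩ := Finset.exists_ne_zero_of_sum_ne_zero hsum
    exact (hDs i).1 W hi
  · calc dsum (fun W => (∑ i, Ds i W) / (n : ℝ≥0∞))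
        = (∑ i, dsum (Ds i)) / n := by
          simpa [dsum] using tsum_sum_div_mul Ds n fun _ => 1
      _ ≤ (∑ _i : Fin n, 1) / n := by gcongr with i; exact (hDs i).2
      _ ≤ 1 := by simp

end Distributions

section SmallStep

variable {Red : Term → List Term → Prop}

theorem isDist_of_conv {M : Term} {D : PDist} (h : Conv Red M D) : IsDist D := by
  induction h with
  | bot => exact isDist_dzero
  | val hV => exact isDist_dirac hV
  | step Ds _ _ ih => exact isDist_sum_div_natCast ih

theorem directedOn_conv (hdet : Relator.RightUnique Red)
    (hval : ∀ ⦃V Ns⦄, V.IsValue → ¬ Red V Ns) (M : Term) :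
    DirectedOn (· ≤ ·) {D | Conv Red M D} := by
  intro D hD
  induction hD with
  | bot M => exact fun E hE => ⟨E, hE, fun _ => zero_le, le_rfl⟩
  | val hV =>
    intro E hE
    cases hE with
    | bot => exact ⟨_, Conv.val hV, le_rfl, fun _ => zero_le⟩
    | val => exact ⟨_, Conv.val hV, le_rfl, le_rfl⟩
    | step _ hred _ => exact absurd hred (hval hV)
  | @step M Ns Ds hred hDs ih =>
    intro E hE
    cases hE with
    | bot => exact ⟨_, Conv.step Ds hred hDs, le_rfl, fun _ => zero_le⟩
    | val hV => exact absurd hred (hval hV)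
    | step Es hred' hEs =>
      obtain rfl := hdet hred hred'
      choose Fs hFs hDF hEF using fun i => ih i (Es i) (hEs i)
      refine ⟨_, Conv.step Fs hred hFs, fun W => ?_, fun W => ?_⟩
      · dsimp only; gcongr with i; exact hDF i W
      · dsimp only; gcongr with i; exact hEF i W

theorem semOf_eq_iSup_subtype (S : Term → PDist → Prop) (M W : Term) :
    semOf S M W = ⨆ D : {D // S M D}, D.1 W :=
  iSup_subtype'

theorem le_semOf {S : Term → PDist → Prop} {M : Term} {D : PDist} (h : S M D) : D ≤ semOf S M :=
  fun W => le_iSup₂ (f := fun (D : PDist) (_ : S M D) => D W) D h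

theorem average_semOf_conv_le {M : Term} {Ns : List Term} (hred : Red M Ns) (W : Term) :
    average Ns (fun N => semOf (Conv Red) N W) ≤ semOf (Conv Red) M W := by
  have (N : Term) : Nonempty {D // Conv Red N D} := ⟨⟨dzero, .bot N⟩⟩
  simp only [average, semOf_eq_iSup_subtype (Conv Red) (List.get _ _)]
  rw [sum_iSup_eq_iSup_sum_pi, ENNReal.iSup_div]
  exact iSup_le fun Ds => le_semOf (Conv.step (fun i => (Ds i).1) hred fun i => (Ds i).2) W

theorem tsum_semOf_mul {S : Term → PDist → Prop} {M : Term}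
    (hdir : DirectedOn (· ≤ ·) {D | S M D}) {α : Type*} (e : α → Term) (f : α → ℝ≥0∞) :
    ∑' a, semOf S M (e a) * f a = ⨆ D : {D // S M D}, ∑' a, D.1 (e a) * f a := by
  simp only [semOf_eq_iSup_subtype, ENNReal.iSup_mul]
  refine tsum_iSup_of_directed fun D E => ?_
  obtain ⟨F, hDF, hEF⟩ := hdir.directed_val D E
  exact ⟨F, fun a => mul_le_mul_left (hDF _) _, fun a => mul_le_mul_left (hEF _) _⟩

theorem isDist_semOf {S : Term → PDist → Prop} {M : Term}
    (hdir : DirectedOn (· ≤ ·) {D | S M D}) (hS : ∀ D, S M D → IsDist D) :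
    IsDist (semOf S M) := by
  constructor
  · intro W hW
    by_contra hV
    exact hW (le_antisymm (iSup₂_le fun D hD => (not_imp_comm.1 ((hS D hD).1 W) hV).le) zero_le)
  · calc dsum (semOf S M) = ⨆ D : {D // S M D}, dsum D.1 := by
          simpa [dsum] using tsum_semOf_mul hdir id fun _ => 1
      _ ≤ 1 := iSup_le fun D => (hS D.1 D.2).2

end SmallStep

section CallByName

theorem not_redN_of_isValue ⦃V : Term⦄ ⦃Ns : List Term⦄ (hV : V.IsValue) : ¬ RedN V Ns := by
  rintro (_ | _ | _) <;> cases hV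

theorem redN_rightUnique : Relator.RightUnique RedN := by
  intro M Ns Ns' h h'
  induction h generalizing Ns' with
  | beta =>
    cases h' with
    | beta => rfl
    | appL h => exact absurd h (not_redN_of_isValue (.lam _))
  | choice => cases h'; rfl
  | appL h ih =>
    cases h' with
    | beta => exact absurd h (not_redN_of_isValue (.lam _))
    | appL h' => rw [ih h']

theorem directedOn_smallN (M : Term) : DirectedOn (· ≤ ·) {D | SmallN M D} :=
  directedOn_conv redN_rightUnique not_redN_of_isValue M

theorem average_semN_le {M : Term} {Ns : List Term} (hred : RedN M Ns) (W : Term) :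
    average Ns (fun N => semN N W) ≤ semN M W :=
  average_semOf_conv_le hred W

theorem isDist_semN (M : Term) : IsDist (semN M) :=
  isDist_semOf (directedOn_smallN M) fun _ => isDist_of_conv

/-- The functional whose fixed points are the solutions of the big-step rules read as equations. It
acts on arbitrary `[0, ∞]`-valued functions, which, unlike subdistributions, form a complete
lattice. -/
noncomputable def bigStepFunctional : (Term → PDist) →o (Term → PDist) where
  toFun S
    | .var x => dirac (.var x)
    | .lam M => dirac (.lam M)
    | .app N L => fun W => ∑' P : Term, S N (.lam P) * S (P.subst 0 L) W
    | .choice N L => fun W => (S N W + S L W) / 2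
  monotone' S T hST M W := by
    cases M with
    | var x => exact le_rfl
    | lam M => exact le_rfl
    | app N L => exact ENNReal.tsum_le_tsum fun P => mul_le_mul' (hST _ _) (hST _ _)
    | choice N L => exact ENNReal.div_le_div_right (add_le_add (hST _ _) (hST _ _)) _

theorem bigStepFunctional_value (S : Term → PDist) {V : Term} (hV : V.IsValue) :
    bigStepFunctional S V = dirac V := by
  cases hV <;> rfl

theorem bigStepFunctional_app (S : Term → PDist) (N L W : Term) :
    bigStepFunctional S (.app N L) W = ∑' P : Term, S N (.lam P) * S (P.subst 0 L) W := rfl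

theorem bigStepFunctional_choice (S : Term → PDist) (N L W : Term) :
    bigStepFunctional S (.choice N L) W = (S N W + S L W) / 2 := rfl

theorem eq_average_of_isFixedPt {S : Term → PDist} (hS : Function.IsFixedPt bigStepFunctional S)
    {M : Term} {Ns : List Term} (hred : RedN M Ns) (W : Term) :
    S M W = average Ns fun N => S N W := by
  have happ (N L W : Term) : S (.app N L) W = ∑' P : Term, S N (.lam P) * S (P.subst 0 L) W := by
    rw [← bigStepFunctional_app, hS]
  induction hred generalizing W with
  | @beta Q L =>
    have hlam : S (.lam Q) = dirac (.lam Q) := by rw [← bigStepFunctional_value S (.lam Q), hS]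
    rw [happ, hlam, tsum_dirac_lam_mul, average_singleton]
  | choice => rw [average_pair, ← bigStepFunctional_choice, hS]
  | @appL N L Ns _ ih =>
    calc S (.app N L) W
        = ∑' P : Term, average Ns (fun K => S K (.lam P)) * S (P.subst 0 L) W := by
          simp only [happ, ih]
      _ = average Ns fun K => ∑' P : Term, S K (.lam P) * S (P.subst 0 L) W :=
          tsum_sum_div_mul _ _ _
      _ = average (Ns.map fun K => .app K L) fun K => S K W := by
          simp only [average_map, happ]

theorem semN_le_of_isFixedPt {S : Term → PDist} (hS : Function.IsFixedPt bigStepFunctional S) :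
    semN ≤ S := by
  refine fun M W => iSup₂_le fun D (hD : Conv RedN M D) => ?_
  induction hD with
  | bot => exact zero_le
  | val hV => rw [← bigStepFunctional_value S hV, hS]
  | step Ds hred _ ih =>
    rw [eq_average_of_isFixedPt hS hred]
    exact ENNReal.div_le_div_right (Finset.sum_le_sum fun i _ => ih i) _

theorem tsum_conv_mul_semN_le {N : Term} {E : PDist} (hE : Conv RedN N E) (L W : Term) :
    ∑' P : Term, E (.lam P) * semN (P.subst 0 L) W ≤ semN (.app N L) W := by
  induction hE with
  | bot => simp [dzero]
  | val hV =>
    cases hV with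
    | var x => simp [dirac]
    | lam Q =>
      rw [tsum_dirac_lam_mul, ← average_singleton (Q.subst 0 L) fun K => semN K W]
      exact average_semN_le .beta W
  | @step N Ns Ds hred _ ih =>
    calc ∑' P : Term, (∑ i, Ds i (.lam P)) / (Ns.length : ℝ≥0∞) * semN (P.subst 0 L) W
        = (∑ i, ∑' P : Term, Ds i (.lam P) * semN (P.subst 0 L) W) / (Ns.length : ℝ≥0∞) :=
          tsum_sum_div_mul _ _ _
      _ ≤ average Ns fun K => semN (.app K L) W := by
          rw [average]
          gcongr with i
          exact ih i
      _ = average (Ns.map fun K => .app K L) fun K => semN K W := by rw [average_map]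
      _ ≤ semN (.app N L) W := average_semN_le (.appL hred) W

theorem bigStepFunctional_semN_le : bigStepFunctional semN ≤ semN := by
  intro M
  cases M with
  | var x => exact le_semOf (Conv.val (.var x))
  | lam M => exact le_semOf (Conv.val (.lam M))
  | app N L =>
    intro W
    rw [bigStepFunctional_app, semN, tsum_semOf_mul (directedOn_smallN N)]
    exact iSup_le fun D => tsum_conv_mul_semN_le D.2 L W
  | choice N L =>
    intro W
    rw [bigStepFunctional_choice, ← average_pair N L fun K => semN K W]
    exact average_semN_le .choice W

theorem lfp_bigStepFunctional : bigStepFunctional.lfp = semN :=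
  le_antisymm (bigStepFunctional.lfp_le bigStepFunctional_semN_le)
    (semN_le_of_isFixedPt bigStepFunctional.isFixedPt_lfp)

theorem bigN_of_isFixedPt {S : Term → PDist} (hS : Function.IsFixedPt bigStepFunctional S)
    (hdist : ∀ M, IsDist (S M)) (M : Term) : BigN M (S M) := by
  refine ⟨fun N E => E = S N, ?_, rfl⟩
  rintro N _ rfl
  refine ⟨hdist N, ?_⟩
  cases N with
  | var x => exact .inl ⟨.var x, (congrFun hS (.var x)).symm⟩
  | lam Q => exact .inl ⟨.lam Q, (congrFun hS (.lam Q)).symm⟩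
  | app N L =>
    exact .inr (.inl ⟨N, L, S N, fun P => S (P.subst 0 L), rfl, rfl, fun _ _ => rfl,
      (congrFun hS (.app N L)).symm⟩)
  | choice N L =>
    exact .inr (.inr ⟨N, L, S N, S L, rfl, rfl, rfl, (congrFun hS (.choice N L)).symm⟩)

theorem bigN_semN (M : Term) : BigN M (semN M) := by
  refine bigN_of_isFixedPt ?_ isDist_semN M
  rw [← lfp_bigStepFunctional]
  exact bigStepFunctional.isFixedPt_lfp

theorem bigSemOf_le {B : Term → PDist → Prop} {M : Term} {D : PDist} (h : B M D) :
    bigSemOf B M ≤ D :=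
  fun W => iInf₂_le (f := fun (D : PDist) (_ : B M D) => D W) D h

theorem bigStepFunctional_bigSemOf_le : bigStepFunctional (bigSemOf BigN) ≤ bigSemOf BigN := by
  refine fun M W => le_iInf₂ fun D ⟨R, hR, hMD⟩ => ?_
  have hle {N : Term} {E : PDist} (hE : R N E) : bigSemOf BigN N ≤ E := bigSemOf_le ⟨R, hR, hE⟩
  obtain ⟨hV, rfl⟩ | ⟨N, L, E, F, rfl, hE, hF, rfl⟩ | ⟨N, L, E, F, rfl, hE, hF, rfl⟩ :=
    (hR M D hMD).2
  · rw [bigStepFunctional_value _ hV]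
  · rw [bigStepFunctional_app]
    refine ENNReal.tsum_le_tsum fun P => ?_
    by_cases hP : E (.lam P) = 0
    · have hzero : bigSemOf BigN N (.lam P) = 0 := le_antisymm (hP ▸ hle hE (.lam P)) zero_le
      rw [hzero, hP, zero_mul, zero_mul]
    · exact mul_le_mul' (hle hE _) (hle (hF P hP) W)
  · rw [bigStepFunctional_choice]
    exact ENNReal.div_le_div_right (add_le_add (hle hE W) (hle hF W)) _

end CallByName

theorem bigSemN_eq_semN_general (M : Term) : bigSemOf BigN M = semN M := by
  have hprefixed : bigStepFunctional.lfp ≤ bigSemOf BigN :=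
    bigStepFunctional.lfp_le bigStepFunctional_bigSemOf_le
  rw [lfp_bigStepFunctional] at hprefixed
  exact le_antisymm (bigSemOf_le (bigN_semN M)) (hprefixed M)

/-- the call-by-name big-step and small-step semantics
coincide. -/
theorem bigSemN_eq_semN (M : Term) (hM : M.Closed) :
    bigSemOf BigN M = semN M :=
  bigSemN_eq_semN_general M
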